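/- Assume K ≥ 2 and N ≥ K+4. At the uniform deformation y^F the QCE method has ghost forces: for every j with |j| ≤ N−2, the QCE force F^qce_j(y^F) := −(1/ε) ∂E^qce(y^F)/∂y_j equals g_j, where g_{K−1} = −φ'(2F)/(2ε), g_K = g_{K+1} = φ'(2F)/(2ε), g_{K+2} = −φ'(2F)/(2ε), g_{−j} = −g_j for j = K−1, K, K+1, K+2, and g_j = 0 for all other j with |j| ≤ N−2. In particular, if φ'(2F) ≠ 0 then the uniform deformation y^F is not an equilibrium of E^qce. -/

import Mathlib

/-!
The force at site `j` is computed by the chain rule. At `y^F` every difference quotient equals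
`F`, and varying `y_j` changes only the difference quotients `j` and `j + 1`, at rates `N` and
`-N`. Hence every site energy has a derivative which is a combination of Kronecker deltas in the
site index (`hasDerivAt_Ec`, `hasDerivAt_Ea`).

Write the QCE energy as the continuum energy over all sites plus the sum of `E^a - E^c` over the
atomistic region. The continuum part contributes a multiple of `δ_{j-1} - δ_{j+1}` summed over all
sites, which vanishes because both neighbours of `j` are sites when `|j| ≤ N - 2`. In
`E^a - E^c` the nearest-neighbour terms cancel, and what remains is `N φ'(2F) / 2` times
`-δ_{j+2} + 2 δ_{j+1} - 2 δ_{j-1} + δ_{j-2}`. Summed over `{-K, …, K}`, this is nonzero only when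
the stencil straddles one of the two interfaces, and gives the ghost forces.
-/

open Finset

noncomputable section

/-- lattice spacing ε = 1/N -/
def eps (N : ℕ) : ℝ := 1 / N

/-- backward first difference y'_ℓ = (y_ℓ - y_{ℓ-1})/ε -/
def D1 (N : ℕ) (y : ℤ → ℝ) (ℓ : ℤ) : ℝ := (y ℓ - y (ℓ - 1)) / eps N

/-- continuum site energy E^c_ℓ(y) -/
def Ec (N : ℕ) (φ : ℝ → ℝ) (y : ℤ → ℝ) (ℓ : ℤ) : ℝ :=
  (φ (2 * D1 N y ℓ) + φ (D1 N y ℓ) + φ (D1 N y (ℓ + 1)) + φ (2 * D1 N y (ℓ + 1))) / 2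

/-- atomistic site energy E^a_ℓ(y) -/
def Ea (N : ℕ) (φ : ℝ → ℝ) (y : ℤ → ℝ) (ℓ : ℤ) : ℝ :=
  (φ (D1 N y (ℓ - 1) + D1 N y ℓ) + φ (D1 N y ℓ) + φ (D1 N y (ℓ + 1))
    + φ (D1 N y (ℓ + 1) + D1 N y (ℓ + 2))) / 2

/-- the QCE energy E^qce(y) = ε Σ_{ℓ∈A} E^a_ℓ(y) + ε Σ_{ℓ∈C} E^c_ℓ(y) -/
def Eqce (N K : ℕ) (φ : ℝ → ℝ) (y : ℤ → ℝ) : ℝ :=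
  eps N * ((∑ ℓ ∈ Icc (-(K : ℤ)) (K : ℤ), Ea N φ y ℓ)
    + ∑ ℓ ∈ Icc (-(N : ℤ) + 1) ((N : ℤ) - 1) \ Icc (-(K : ℤ)) (K : ℤ), Ec N φ y ℓ)

/-- the uniform deformation y^F_j = F j ε -/
def yF (N : ℕ) (F : ℝ) : ℤ → ℝ := fun j => F * (j : ℝ) * eps N

/-- the vector of ghost forces -/
def ghost (N K : ℕ) (φ : ℝ → ℝ) (F : ℝ) (j : ℤ) : ℝ :=
  if j = (K : ℤ) - 1 ∨ j = (K : ℤ) + 2 then -(deriv φ (2 * F)) * (N : ℝ) / 2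
  else if j = (K : ℤ) ∨ j = (K : ℤ) + 1 then deriv φ (2 * F) * (N : ℝ) / 2
  else if j = -((K : ℤ) - 1) ∨ j = -((K : ℤ) + 2) then deriv φ (2 * F) * (N : ℝ) / 2
  else if j = -(K : ℤ) ∨ j = -((K : ℤ) + 1) then -(deriv φ (2 * F)) * (N : ℝ) / 2
  else 0

/-- The Kronecker delta at `m`, as a real-valued function of the site index `ℓ`. -/
def kron (m ℓ : ℤ) : ℝ := if ℓ = m then 1 else 0

lemma sum_kron (s : Finset ℤ) (m : ℤ) : ∑ ℓ ∈ s, kron m ℓ = if m ∈ s then 1 else 0 := by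
  simp [kron, Finset.sum_ite_eq']

lemma kron_add (m ℓ a : ℤ) : kron m (ℓ + a) = kron (m - a) ℓ := by
  unfold kron
  congr 1
  exact propext (by omega)

lemma D1_yF (N : ℕ) (hN : N ≠ 0) (F : ℝ) (ℓ : ℤ) : D1 N (yF N F) ℓ = F := by
  have : (N : ℝ) ≠ 0 := by exact_mod_cast hN
  unfold D1 yF eps
  push_cast
  field_simp
  ring

/-- Only the difference quotients `j` and `j + 1` involve `y_j`. -/
lemma hasDerivAt_D1 (N : ℕ) (y : ℤ → ℝ) (j ℓ : ℤ) (t : ℝ) :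
    HasDerivAt (fun s : ℝ => D1 N (Function.update y j s) ℓ)
      (N * (kron j ℓ - kron (j + 1) ℓ)) t := by
  have h (i : ℤ) : HasDerivAt (fun s : ℝ => Function.update y j s i) (kron j i) t := by
    by_cases hi : i = j
    · subst hi
      simpa [kron, Function.update_self] using hasDerivAt_id' t
    · simpa [kron, hi] using hasDerivAt_const t (y i)
  have h1 := ((h ℓ).sub (h (ℓ - 1))).div_const (eps N)
  have h2 : kron j (ℓ - 1) = kron (j + 1) ℓ := by
    simpa [sub_eq_add_neg] using kron_add j ℓ (-1)
  rw [h2] at h1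
  refine h1.congr_deriv ?_
  simp only [eps, one_div, div_inv_eq_mul]
  ring

/-- The chain rule for a bond energy `φ (u s)`. -/
lemma hasDerivAt_bond {φ : ℝ → ℝ} (hφ : Differentiable ℝ φ) {u : ℝ → ℝ} {u' t r : ℝ}
    (hu : HasDerivAt u u' t) (hr : u t = r) :
    HasDerivAt (fun s => φ (u s)) (deriv φ r * u') t := by
  subst hr
  exact (hφ (u t)).hasDerivAt.comp t hu

lemma hasDerivAt_Ec (N : ℕ) (hN : N ≠ 0) {φ : ℝ → ℝ} (hφ : Differentiable ℝ φ) (F : ℝ)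
    (j ℓ : ℤ) :
    HasDerivAt (fun s : ℝ => Ec N φ (Function.update (yF N F) j s) ℓ)
      (N * (deriv φ (2 * F) + deriv φ F / 2) * (kron (j - 1) ℓ - kron (j + 1) ℓ))
      (yF N F j) := by
  have d (i : ℤ) := hasDerivAt_D1 N (yF N F) j i (yF N F j)
  have e (i : ℤ) : D1 N (Function.update (yF N F) j (yF N F j)) i = F := by
    rw [Function.update_eq_self, D1_yF N hN]
  have h2 (i : ℤ) := hasDerivAt_bond hφ (r := 2 * F) ((d i).const_mul 2) (by rw [e])
  have h1 (i : ℤ) := hasDerivAt_bond hφ (d i) (e i)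
  have h := ((((h2 ℓ).add (h1 ℓ)).add (h1 (ℓ + 1))).add (h2 (ℓ + 1))).div_const 2
  refine h.congr_deriv ?_
  simp only [kron_add, add_sub_cancel_right]
  ring

lemma hasDerivAt_Ea (N : ℕ) (hN : N ≠ 0) {φ : ℝ → ℝ} (hφ : Differentiable ℝ φ) (F : ℝ)
    (j ℓ : ℤ) :
    HasDerivAt (fun s : ℝ => Ea N φ (Function.update (yF N F) j s) ℓ)
      (N * (deriv φ (2 * F) + deriv φ F / 2) * (kron (j - 1) ℓ - kron (j + 1) ℓ)
        + N * deriv φ (2 * F) / 2 *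
          (-kron (j + 2) ℓ + 2 * kron (j + 1) ℓ - 2 * kron (j - 1) ℓ + kron (j - 2) ℓ))
      (yF N F j) := by
  have d (i : ℤ) := hasDerivAt_D1 N (yF N F) j i (yF N F j)
  have e (i : ℤ) : D1 N (Function.update (yF N F) j (yF N F j)) i = F := by
    rw [Function.update_eq_self, D1_yF N hN]
  have h2 (i k : ℤ) := hasDerivAt_bond hφ (r := 2 * F) ((d i).add (d k))
    (by simp only [Pi.add_apply, e]; ring)
  have h1 (i : ℤ) := hasDerivAt_bond hφ (d i) (e i)
  have h := ((((h2 (ℓ - 1) ℓ).add (h1 ℓ)).add (h1 (ℓ + 1))).add (h2 (ℓ + 1) (ℓ + 2))).div_const 2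
  refine h.congr_deriv ?_
  have k1 (m : ℤ) : kron m (ℓ - 1) = kron (m + 1) ℓ := by
    simpa [sub_eq_add_neg] using kron_add m ℓ (-1)
  simp only [kron_add, k1, add_sub_cancel_right]
  rw [show j + 1 + 1 = j + 2 by ring, show j + 1 - 2 = j - 1 by ring]
  ring

/-- The derivative of the QCE energy at `y^F`: the stencil `(-1, 2, -2, 1)` at `j + 2`, `j + 1`, `j - 1`, `j - 2` applied to the indicator of
the atomistic region. -/
lemma hasDerivAt_Eqce (N K : ℕ) (hKN : K + 4 ≤ N) {φ : ℝ → ℝ} (hφ : Differentiable ℝ φ)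
    (F : ℝ) (j : ℤ) (hj : |j| ≤ (N : ℤ) - 2) :
    HasDerivAt (fun s : ℝ => Eqce N K φ (Function.update (yF N F) j s))
      (eps N * (N * deriv φ (2 * F) / 2 *
        (-(if j + 2 ∈ Icc (-(K : ℤ)) K then 1 else 0)
          + 2 * (if j + 1 ∈ Icc (-(K : ℤ)) K then 1 else 0)
          - 2 * (if j - 1 ∈ Icc (-(K : ℤ)) K then 1 else 0)
          + (if j - 2 ∈ Icc (-(K : ℤ)) K then 1 else 0))))
      (yF N F j) := by
  have hN : N ≠ 0 := by omega
  rw [abs_le] at hj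
  have hsub : Icc (-(K : ℤ)) (K : ℤ) ⊆ Icc (-(N : ℤ) + 1) ((N : ℤ) - 1) :=
    Finset.Icc_subset_Icc (by omega) (by omega)
  have hA := HasDerivAt.fun_sum (u := Icc (-(K : ℤ)) (K : ℤ))
    fun ℓ _ => hasDerivAt_Ea N hN hφ F j ℓ
  have hC := HasDerivAt.fun_sum
    (u := Icc (-(N : ℤ) + 1) ((N : ℤ) - 1) \ Icc (-(K : ℤ)) (K : ℤ))
    fun ℓ _ => hasDerivAt_Ec N hN hφ F j ℓ
  refine ((hA.add hC).const_mul (eps N)).congr_deriv ?_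
  congr 1
  -- The continuum stencil, summed over all sites, vanishes.
  have h0 : ∑ ℓ ∈ Icc (-(N : ℤ) + 1) ((N : ℤ) - 1),
      (N * (deriv φ (2 * F) + deriv φ F / 2) * (kron (j - 1) ℓ - kron (j + 1) ℓ)) = 0 := by
    rw [← Finset.mul_sum, Finset.sum_sub_distrib, sum_kron, sum_kron,
      if_pos (Finset.mem_Icc.2 (by omega)), if_pos (Finset.mem_Icc.2 (by omega))]
    ring
  rw [← Finset.sum_sdiff hsub] at h0
  rw [Finset.sum_add_distrib, add_right_comm, add_comm (∑ ℓ ∈ Icc _ _, _) (∑ ℓ ∈ _ \ _, _), h0,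
    zero_add, ← Finset.mul_sum]
  simp only [Finset.sum_add_distrib, Finset.sum_sub_distrib, Finset.sum_neg_distrib,
    ← Finset.mul_sum, sum_kron]

lemma force_eq_ghost (N K : ℕ) (hK : 2 ≤ K) (hKN : K + 4 ≤ N) {φ : ℝ → ℝ}
    (hφ : Differentiable ℝ φ) (F : ℝ) (j : ℤ) (hj : |j| ≤ (N : ℤ) - 2) :
    -(1 / eps N) * deriv (fun s : ℝ => Eqce N K φ (Function.update (yF N F) j s)) (yF N F j)
      = ghost N K φ F j := by
  have hε : eps N ≠ 0 := by
    have : (N : ℝ) ≠ 0 := by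
      have : N ≠ 0 := by omega
      exact_mod_cast this
    simpa [eps] using this
  rw [(hasDerivAt_Eqce N K hKN hφ F j hj).deriv, ← mul_assoc, neg_mul, one_div,
    inv_mul_cancel₀ hε]
  simp only [ghost, Finset.mem_Icc]
  split_ifs <;> first | (exfalso; omega) | ring

/-- Ghost forces of the QCE method: at the uniform deformation y^F, the QCE force
F^qce_j(y^F) = −(1/ε) ∂E^qce(y^F)/∂y_j equals the ghost force g_j for all |j| ≤ N−2;
in particular if φ'(2F) ≠ 0 then y^F is not an equilibrium of E^qce. -/
theorem stmt16 (N K : ℕ) (hN : 2 ≤ N) (hK : 2 ≤ K) (hKN : K + 4 ≤ N)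
    (φ : ℝ → ℝ) (hφ : Differentiable ℝ φ) (F : ℝ) (hF : 0 < F) :
    (∀ j : ℤ, |j| ≤ (N : ℤ) - 2 →
      -(1 / eps N) * deriv (fun s : ℝ => Eqce N K φ (Function.update (yF N F) j s)) (yF N F j)
        = ghost N K φ F j)
    ∧ (deriv φ (2 * F) ≠ 0 →
        ∃ j : ℤ, |j| ≤ (N : ℤ) - 2 ∧
          deriv (fun s : ℝ => Eqce N K φ (Function.update (yF N F) j s)) (yF N F j) ≠ 0) := by
  refine ⟨fun j hj => force_eq_ghost N K hK hKN hφ F j hj, fun h => ?_⟩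
  have hj : |(K : ℤ) - 1| ≤ (N : ℤ) - 2 := by
    rw [abs_le]
    omega
  refine ⟨(K : ℤ) - 1, hj, fun h0 => h ?_⟩
  have hg := force_eq_ghost N K hK hKN hφ F _ hj
  have hN0 : (N : ℝ) ≠ 0 := by
    have : N ≠ 0 := by omega
    exact_mod_cast this
  rw [h0, mul_zero, ghost, if_pos (Or.inl rfl)] at hg
  have : deriv φ (2 * F) * N = 0 := by linarith
  exact (mul_eq_zero.1 this).resolve_right hN0

end
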